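/- Let f : Finset E → ℝ be submodular, let e₁, …, e_m be distinct elements of E, and let T be a finset with T ⊆ {e₁, …, e_m}. Then f(T) ≥ f(∅) + Σ_{i : e_i ∈ T} f(e_i | {e₁, …, e_{i−1}}). -/

import Mathlib

open Finset

/-!
Build `T` by adding its elements in the order `e 0, e 1, …`; the gains along the way telescope
to `f T - f ∅`. Each `e i` is added to `T ∩ {e 0, …, e (i - 1)}`, a subset of the full prefix
`{e 0, …, e (i - 1)}`, so by submodularity its gain is at least the gain over the full prefix.
A repeated element contributes `0` to both sides.
-/

section

variable {E G : Type*} [DecidableEq E]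

/-- The marginal gain `f(e | S)` of adding the element `e` to the set `S`; it is `0` when `e`
already belongs to `S`. -/
def marginalGain [Sub G] (f : Finset E → G) (S : Finset E) (e : E) : G :=
  f (insert e S) - f S

/-- Submodularity of a set function, encoded as diminishing returns: the gain of a new element
decreases as the set it is added to grows. -/
def IsSubmodular [Sub G] [LE G] (f : Finset E → G) : Prop :=
  ∀ X Y : Finset E, X ⊆ Y → ∀ e ∉ Y, marginalGain f Y e ≤ marginalGain f X e

theorem marginalGain_of_mem [AddGroup G] (f : Finset E → G) {S : Finset E} {e : E} (he : e ∈ S) :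
    marginalGain f S e = 0 := by
  rw [marginalGain, insert_eq_of_mem he, sub_self]

theorem IsSubmodular.marginalGain_le_marginalGain_inter [AddGroup G] [Preorder G]
    {f : Finset E → G} (hf : IsSubmodular f) (S : Finset E) {T : Finset E} {e : E} (he : e ∈ T) :
    marginalGain f S e ≤ marginalGain f (T ∩ S) e := by
  by_cases heS : e ∈ S
  · rw [marginalGain_of_mem f heS, marginalGain_of_mem f (mem_inter.2 ⟨he, heS⟩)]
  · exact hf (T ∩ S) S inter_subset_right e heS

theorem sum_marginalGain_inter_image_range [AddCommGroup G] (f : Finset E → G) (e : ℕ → E)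
    (T : Finset E) (m : ℕ) :
    ∑ i ∈ range m with e i ∈ T, marginalGain f (T ∩ (range i).image e) (e i) =
      f (T ∩ (range m).image e) - f ∅ := by
  have gain_eq (i : ℕ) :
      (if e i ∈ T then marginalGain f (T ∩ (range i).image e) (e i) else 0) =
        f (T ∩ (range (i + 1)).image e) - f (T ∩ (range i).image e) := by
    rw [range_add_one, image_insert]
    split_ifs with hi
    · rw [inter_insert_of_mem hi, marginalGain]
    · rw [inter_insert_of_notMem hi, sub_self]
  calc
    _ = ∑ i ∈ range m, (f (T ∩ (range (i + 1)).image e) - f (T ∩ (range i).image e)) := by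
      simp_rw [sum_filter, gain_eq]
    _ = f (T ∩ (range m).image e) - f ∅ := by
      rw [sum_range_sub fun i ↦ f (T ∩ (range i).image e), range_zero, image_empty, inter_empty]

theorem stmt_16_general [AddCommGroup G] [PartialOrder G] [IsOrderedAddMonoid G]
    {f : Finset E → G} (hf : IsSubmodular f) (m : ℕ) (e : ℕ → E) {T : Finset E}
    (hT : T ⊆ (range m).image e) :
    f ∅ + ∑ i ∈ range m with e i ∈ T, marginalGain f ((range i).image e) (e i) ≤ f T := by
  calc
    _ ≤ f ∅ + ∑ i ∈ range m with e i ∈ T, marginalGain f (T ∩ (range i).image e) (e i) := by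
      gcongr with i hi
      exact hf.marginalGain_le_marginalGain_inter _ (mem_filter.1 hi).2
    _ = f T := by
      rw [sum_marginalGain_inter_image_range, inter_eq_left.2 hT, add_sub_cancel]

end

/-- Pointwise telescoping inequality for submodular functions. -/
theorem stmt_16 {E : Type*} [DecidableEq E]
    (f : Finset E → ℝ)
    (hsubmod : ∀ X Y : Finset E, X ⊆ Y → ∀ e ∉ Y,
      f (insert e Y) - f Y ≤ f (insert e X) - f X)
    (m : ℕ) (e : ℕ → E) (hinj : Set.InjOn e (Set.Iio m))
    (T : Finset E) (hT : T ⊆ (Finset.range m).image e) :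
    f T ≥ f ∅ + ∑ i ∈ (Finset.range m).filter (fun i => e i ∈ T),
      (f (insert (e i) ((Finset.range i).image e)) - f ((Finset.range i).image e)) :=
  stmt_16_general hsubmod m e hT
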